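/- arXiv:2304.12835 — 9 statements merged into one kernel-verified Lean document; each statement's English description precedes it below -/
import Mathlib

section
/- Let Γ ⊂ ℝⁿ be an open symmetric convex cone as below and let f satisfy the concavity, symmetry, smoothness assumptions and condition (★). Then there exists a constant θ > 0 depending only on Γ (independent of f) such that for every λ ∈ Γ with λ₁ ≤ λ₂ ≤ … ≤ λₙ: (1) fᵢ(λ) ≥ 0 for all 1 ≤ i ≤ n and Σⱼ₌₁ⁿ fⱼ(λ) > 0; (2) fᵢ(λ) ≥ θ · Σⱼ₌₁ⁿ fⱼ(λ) for all 1 ≤ i ≤ 1 + κ_Γ. -/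
/-!
Everything follows from the tangent-plane inequality `f y - f x ≤ Df(x)(y - x)` for concave `f`.
Applied at `y = tμ` with `t` large, condition (★) makes the left side positive, first for `μ = x`
and then for arbitrary `μ ∈ Γ`, so `Df(x) μ > 0` for all `x, μ ∈ Γ` (`fderiv_pos`). Taking
`μ = (1,…,1)` and `μ = eᵢ + ε(1,…,1)` gives part (1).

Applied at `y` a transposition of `x`, where `f y = f x`, it shows that the partial derivatives
decrease as the coordinates of `x` increase (`partialDeriv_antitone`).
Since `Γ` is open, `(0,…,0,1,…,1) - ε(1,…,1) ∈ Γ` for some `ε > 0` depending only on `Γ`, where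
there are `κ` zeros. Positivity of `Df(x)` on this vector reads
`ε ∑ⱼ fⱼ < ∑_{j > κ} fⱼ ≤ n f_{κ+1}` (one-based indices), so `θ = ε / n` works.
-/

open Finset

noncomputable section

/-- Γ is an open symmetric convex cone in ℝⁿ with vertex at the origin, nonempty boundary,
containing the positive orthant. -/
def IsAdmissibleCone {n : ℕ} (Γ : Set (Fin n → ℝ)) : Prop :=
  IsOpen Γ ∧ Convex ℝ Γ ∧
    (∀ x ∈ Γ, ∀ t : ℝ, 0 < t → t • x ∈ Γ) ∧
    (∀ x ∈ Γ, ∀ σ : Equiv.Perm (Fin n), x ∘ σ ∈ Γ) ∧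
    {x : Fin n → ℝ | ∀ i, 0 < x i} ⊆ Γ ∧
    (frontier Γ).Nonempty

/-- The vector `(0,…,0,1,…,1)` with `k` zeros followed by `n-k` ones. -/
def zeroOneVec (n k : ℕ) : Fin n → ℝ := fun i => if (i : ℕ) < k then 0 else 1

/-- The vector `(0,…,0,1)`. -/
def eLast (n : ℕ) : Fin n → ℝ := fun i => if (i : ℕ) = n - 1 then 1 else 0

/-- The vector `(1,…,1,1-ϱ)`. -/
def rhoVec (n : ℕ) (ϱ : ℝ) : Fin n → ℝ := fun i => if (i : ℕ) = n - 1 then 1 - ϱ else 1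

/-- The linear map `T_ϱ` sending `μ` to `λ` with `λᵢ = ϱ⁻¹ (∑ⱼ μⱼ - (n-ϱ) μᵢ)`. -/
def Tmap (n : ℕ) (ϱ : ℝ) (μ : Fin n → ℝ) : Fin n → ℝ :=
  fun i => ϱ⁻¹ * ((∑ j, μ j) - ((n : ℝ) - ϱ) * μ i)

/-- The inverse map of `T_ϱ`, sending `λ` to `μ` with `μᵢ = (n-ϱ)⁻¹ (∑ⱼ λⱼ - ϱ λᵢ)`. -/
def TmapInv (n : ℕ) (ϱ : ℝ) (lam : Fin n → ℝ) : Fin n → ℝ :=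
  fun i => ((n : ℝ) - ϱ)⁻¹ * ((∑ j, lam j) - ϱ * lam i)

/-- `f` is symmetric (invariant under permutations of coordinates) on `Γ`. -/
def IsSymmetricOn {n : ℕ} (f : (Fin n → ℝ) → ℝ) (Γ : Set (Fin n → ℝ)) : Prop :=
  ∀ x ∈ Γ, ∀ σ : Equiv.Perm (Fin n), f (x ∘ σ) = f x

/-- Condition (★): for all `λ, μ ∈ Γ`, `lim_{t→∞} f(tλ) > f(μ)`. -/
def CondStar {n : ℕ} (f : (Fin n → ℝ) → ℝ) (Γ : Set (Fin n → ℝ)) : Prop :=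
  ∀ lam ∈ Γ, ∀ mu ∈ Γ, ∃ T : ℝ, 0 < T ∧ ∀ t : ℝ, T ≤ t → f mu < f (t • lam)

/-- The partial derivative `fᵢ(λ) = ∂f/∂λᵢ (λ)`. -/
def partialDeriv {n : ℕ} (f : (Fin n → ℝ) → ℝ) (lam : Fin n → ℝ) (i : Fin n) : ℝ :=
  fderiv ℝ f lam (Pi.single i 1)

/-- A concave function lies below its tangent planes. -/
lemma sub_le_fderiv {n : ℕ} {Γ : Set (Fin n → ℝ)} {f : (Fin n → ℝ) → ℝ}
    (hc : ConcaveOn ℝ Γ f) {x y : Fin n → ℝ} (hx : x ∈ Γ) (hy : y ∈ Γ)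
    (hd : DifferentiableAt ℝ f x) : f y - f x ≤ fderiv ℝ f x (y - x) := by
  have h1 := hc.comp_affineMap (AffineMap.lineMap x y : ℝ →ᵃ[ℝ] (Fin n → ℝ))
  have h2 : HasDerivAt (f ∘ (AffineMap.lineMap x y : ℝ →ᵃ[ℝ] (Fin n → ℝ)))
      (fderiv ℝ f x (y - x)) 0 :=
    hd.hasFDerivAt.comp_hasDerivAt_of_eq (0 : ℝ) AffineMap.hasDerivAt_lineMap (by simp)
  have h3 := h1.slope_le_of_hasDerivAt (x := 0) (y := 1) (by simpa using hx) (by simpa using hy)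
    one_pos h2
  simpa [slope_def_field] using h3

lemma fderiv_eq_sum {n : ℕ} (f : (Fin n → ℝ) → ℝ) (x v : Fin n → ℝ) :
    fderiv ℝ f x v = ∑ j, v j * partialDeriv f x j := by
  conv_lhs => rw [← Finset.univ_sum_single v]
  rw [map_sum]
  refine Finset.sum_congr rfl fun j _ => ?_
  have : (Pi.single j (v j) : Fin n → ℝ) = v j • Pi.single j 1 := by
    rw [← Pi.single_smul, smul_eq_mul, mul_one]
  rw [this, map_smul, smul_eq_mul, partialDeriv]

/-- Under condition (★) the gradient of `f` at any point of the cone is strictly positive on the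
whole cone. -/
lemma fderiv_pos {n : ℕ} {Γ : Set (Fin n → ℝ)} {f : (Fin n → ℝ) → ℝ}
    (hcone : ∀ x ∈ Γ, ∀ t : ℝ, 0 < t → t • x ∈ Γ)
    (hc : ConcaveOn ℝ Γ f) (hs : CondStar f Γ) {x v : Fin n → ℝ} (hx : x ∈ Γ) (hv : v ∈ Γ)
    (hd : DifferentiableAt ℝ f x) : 0 < fderiv ℝ f x v := by
  have key : ∀ w ∈ Γ, ∃ T : ℝ, 0 < T ∧
      ∀ t, T ≤ t → fderiv ℝ f x x < t * fderiv ℝ f x w := by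
    intro w hw
    obtain ⟨T, hT, h⟩ := hs w hw x hx
    refine ⟨T, hT, fun t ht => ?_⟩
    have h1 := sub_le_fderiv hc hx (hcone w hw t (hT.trans_le ht)) hd
    rw [map_sub, map_smul, smul_eq_mul] at h1
    linarith [h t ht]
  have hxx : 0 < fderiv ℝ f x x := by
    obtain ⟨T, hT, h⟩ := key x hx
    nlinarith [h (T + 1) (by linarith)]
  obtain ⟨T, hT, h⟩ := key v hv
  exact pos_of_mul_pos_right (hxx.trans (h T le_rfl)) hT.le

/-- By symmetry and concavity, larger coordinates have smaller partial derivatives. The strict case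
comes from the tangent-plane inequality at a transposed point; for equal coordinates the
transposition fixes `x`, and the two partial derivatives agree by the chain rule. -/
lemma partialDeriv_antitone {n : ℕ} {Γ : Set (Fin n → ℝ)} {f : (Fin n → ℝ) → ℝ}
    (hopen : IsOpen Γ) (hsymm : ∀ x ∈ Γ, ∀ σ : Equiv.Perm (Fin n), x ∘ σ ∈ Γ)
    (hf : IsSymmetricOn f Γ) (hc : ConcaveOn ℝ Γ f) {x : Fin n → ℝ} (hx : x ∈ Γ)
    (hd : DifferentiableAt ℝ f x) {i j : Fin n} (hij : x i ≤ x j) :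
    partialDeriv f x j ≤ partialDeriv f x i := by
  rcases hij.lt_or_eq with h | h
  · have h1 := sub_le_fderiv hc hx (hsymm x hx (Equiv.swap i j)) hd
    have h2 : x ∘ Equiv.swap i j - x
        = (x j - x i) • (Pi.single i 1 - Pi.single j 1 : Fin n → ℝ) := by
      have hne : i ≠ j := by rintro rfl; exact lt_irrefl _ h
      ext k
      by_cases hki : k = i
      · subst hki; simp [hne]
      · by_cases hkj : k = j
        · subst hkj; simp [hne.symm]
        · simp [hki, hkj, Equiv.swap_apply_of_ne_of_ne]
    rw [hf x hx, h2, map_smul, map_sub, smul_eq_mul, sub_self] at h1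
    have h3 := nonneg_of_mul_nonneg_right h1 (sub_pos.2 h)
    exact sub_nonneg.1 h3
  · let L : (Fin n → ℝ) →L[ℝ] (Fin n → ℝ) :=
      LinearMap.toContinuousLinearMap (LinearMap.funLeft ℝ ℝ (Equiv.swap i j))
    have hL : ∀ y, L y = y ∘ Equiv.swap i j := fun y => rfl
    have hLx : L x = x := by
      rw [hL]
      ext k
      by_cases hki : k = i
      · subst hki; simp [h]
      · by_cases hkj : k = j
        · subst hkj; simp [h]
        · simp [Equiv.swap_apply_of_ne_of_ne hki hkj]
    have h1 : HasFDerivAt (f ∘ L) ((fderiv ℝ f x).comp L) x := by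
      refine HasFDerivAt.comp x ?_ L.hasFDerivAt
      rw [hLx]; exact hd.hasFDerivAt
    have h2 : (f ∘ L) =ᶠ[nhds x] f := by
      filter_upwards [hopen.mem_nhds hx] with y hy using hf y hy _
    have h3 := (h2.hasFDerivAt_iff.1 h1).unique hd.hasFDerivAt
    have h4 : L (Pi.single i 1) = Pi.single j 1 := by
      rw [hL]
      ext k
      simp only [Function.comp_apply, Pi.single_apply, Equiv.swap_apply_eq_iff,
        Equiv.swap_apply_left]
    have h5 := congrArg (fun D => D (Pi.single i 1)) h3
    simp only [ContinuousLinearMap.comp_apply, h4] at h5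
    exact h5.le

/-- partial uniform ellipticity. There is `θ > 0` depending only on `Γ`
such that for every admissible `f` and every `λ ∈ Γ` with increasing coordinates:
(1) `fᵢ(λ) ≥ 0` for all `i` and `∑ⱼ fⱼ(λ) > 0`;
(2) `fᵢ(λ) ≥ θ ∑ⱼ fⱼ(λ)` for all `i` with `1 ≤ i ≤ 1 + κ_Γ` (zero-based: `i ≤ κ_Γ`). -/
theorem partial_uniform_ellipticity
    (n : ℕ) (hn : 1 ≤ n) (Γ : Set (Fin n → ℝ)) (hΓ : IsAdmissibleCone Γ)
    (κ : ℕ) (hκ : IsGreatest {k : ℕ | k ≤ n - 1 ∧ zeroOneVec n k ∈ Γ} κ) :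
    ∃ θ : ℝ, 0 < θ ∧
      ∀ f : (Fin n → ℝ) → ℝ, ContDiffOn ℝ (⊤ : ℕ∞) f Γ → IsSymmetricOn f Γ →
        ConcaveOn ℝ Γ f → CondStar f Γ →
        ∀ lam ∈ Γ, Monotone lam →
          ((∀ i : Fin n, 0 ≤ partialDeriv f lam i) ∧
            0 < ∑ j : Fin n, partialDeriv f lam j) ∧
          (∀ i : Fin n, (i : ℕ) ≤ κ →
            θ * ∑ j : Fin n, partialDeriv f lam j ≤ partialDeriv f lam i) := by
  obtain ⟨hopen, -, hcone, hsymm, hpos, -⟩ := hΓ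
  obtain ⟨⟨hκn, hκΓ⟩, -⟩ := hκ
  obtain ⟨ε, hε, hεΓ⟩ : ∃ ε : ℝ, 0 < ε ∧ (fun i => zeroOneVec n κ i - ε) ∈ Γ := by
    have hcont : Continuous fun e : ℝ => (fun i => zeroOneVec n κ i - e : Fin n → ℝ) := by
      fun_prop
    have hmem := (hopen.preimage hcont).mem_nhds (show (0 : ℝ) ∈ _ by simpa using hκΓ)
    obtain ⟨δ, hδ, hball⟩ := Metric.mem_nhds_iff.1 hmem
    refine ⟨δ / 2, by positivity, hball ?_⟩
    rw [Metric.mem_ball, Real.dist_eq, sub_zero, abs_of_pos (by positivity)]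
    linarith
  have hn0 : (0 : ℝ) < n := by exact_mod_cast hn
  refine ⟨ε / n, by positivity, fun f hsm hf hc hs lam hlam hmono => ?_⟩
  have hd : DifferentiableAt ℝ f lam :=
    (hsm.contDiffAt (hopen.mem_nhds hlam)).differentiableAt (by simp)
  have hD : ∀ v ∈ Γ, 0 < ∑ j, v j * partialDeriv f lam j := fun v hv => by
    rw [← fderiv_eq_sum]; exact fderiv_pos hcone hc hs hlam hv hd
  have hS : 0 < ∑ j, partialDeriv f lam j := by
    simpa using hD (fun _ => 1) (hpos fun _ => one_pos)
  have hnn : ∀ i, 0 ≤ partialDeriv f lam i := by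
    intro i
    by_contra! hneg
    -- `e` is chosen so that `Df(lam)` vanishes on `eᵢ + e(1,…,1)`, a vector of the open orthant.
    set e := -partialDeriv f lam i / ∑ j, partialDeriv f lam j with he
    have hepos : 0 < e := div_pos (by linarith) hS
    have h := hD (fun j => (Pi.single i 1 : Fin n → ℝ) j + e) (hpos fun j => by
      have : (0 : ℝ) ≤ (Pi.single i 1 : Fin n → ℝ) j := by
        rw [Pi.single_apply]; split_ifs <;> norm_num
      change 0 < _ + e
      linarith)
    simp only [add_mul, Finset.sum_add_distrib, ← Finset.mul_sum, Pi.single_apply, ite_mul,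
      one_mul, zero_mul, Finset.sum_ite_eq', Finset.mem_univ, if_true] at h
    rw [he, div_mul_cancel₀ _ hS.ne'] at h
    linarith
  refine ⟨⟨hnn, hS⟩, fun i hi => ?_⟩
  have h := hD _ hεΓ
  simp only [sub_mul, Finset.sum_sub_distrib, ← Finset.mul_sum] at h
  have hle : ∑ j, zeroOneVec n κ j * partialDeriv f lam j ≤ ∑ _j : Fin n, partialDeriv f lam i := by
    refine Finset.sum_le_sum fun j _ => ?_
    unfold zeroOneVec
    split_ifs with hj
    · simpa using hnn i
    · rw [one_mul]
      exact partialDeriv_antitone hopen hsymm hf hc hlam hd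
        (hmono (Fin.le_def.2 (hi.trans (not_lt.1 hj))))
  rw [Finset.sum_const, Finset.card_univ, Fintype.card_fin, nsmul_eq_mul] at hle
  rw [div_mul_eq_mul_div, div_le_iff₀ hn0]
  linarith
end
end

section
/- Let Γ ⊂ ℝⁿ be an open symmetric convex cone as below and let f be a smooth, symmetric, concave function on Γ such that sup_Γ f = +∞ and for every λ ∈ Γ the limit of f(tλ) as t → +∞ is not −∞ (i.e. for every λ ∈ Γ there exist c ∈ ℝ and T > 0 with f(tλ) ≥ c for all t ≥ T). Then f satisfies condition (★): for all λ, μ ∈ Γ there exists T > 0 such that f(tλ) > f(μ) for all t ≥ T. -/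
/-!
A concave function on a convex cone that is eventually bounded below along every ray is
nondecreasing in the order defined by the cone: for `x, lam ∈ Γ` and small `ε > 0`,
`f ((1 - ε) x + lam) ≥ (1 - ε) f x + ε f (ε⁻¹ lam) ≥ (1 - ε) f x + ε c`, and `ε → 0` gives
`f (x + lam) ≥ f x`. Given `mu`, choose `x ∈ Γ` with `f x > f mu`; since `Γ` is an open cone,
`t lam - x ∈ Γ` for all large `t`, so that `f (t lam) ≥ f x > f mu`.
-/

open Finset

noncomputable section

/-- Monotonicity of `f` in the cone order. -/
theorem le_add_of_mem_cone {n : ℕ} {Γ : Set (Fin n → ℝ)} (hopen : IsOpen Γ)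
    (hcone : ∀ x ∈ Γ, ∀ t : ℝ, 0 < t → t • x ∈ Γ)
    {f : (Fin n → ℝ) → ℝ} (hf : ContinuousOn f Γ) (hconc : ConcaveOn ℝ Γ f)
    (hbdd : ∀ lam ∈ Γ, ∃ c : ℝ, ∃ T : ℝ, 0 < T ∧ ∀ t : ℝ, T ≤ t → c ≤ f (t • lam))
    {x lam : Fin n → ℝ} (hx : x ∈ Γ) (hlam : lam ∈ Γ) : f x ≤ f (x + lam) := by
  obtain ⟨c, T, hT, hc⟩ := hbdd lam hlam
  have hmem : x + lam ∈ Γ := by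
    have h := hcone _ (hconc.1 hx hlam (by norm_num : (0 : ℝ) ≤ 1 / 2)
      (by norm_num : (0 : ℝ) ≤ 1 / 2) (by norm_num)) 2 (by norm_num)
    simpa [smul_smul] using h
  have hcont : ContinuousAt f (x + lam) := hf.continuousAt (hopen.mem_nhds hmem)
  have h1 : Filter.Tendsto (fun ε : ℝ => f ((1 - ε) • x + lam)) (nhdsWithin 0 (Set.Ioi 0))
      (nhds (f (x + lam))) := by
    refine hcont.tendsto.comp (Filter.Tendsto.mono_left ?_ nhdsWithin_le_nhds)
    have : Continuous (fun ε : ℝ => (1 - ε) • x + lam) := by fun_prop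
    simpa using this.tendsto 0
  have h2 : Filter.Tendsto (fun ε : ℝ => (1 - ε) * f x + ε * c) (nhdsWithin 0 (Set.Ioi 0))
      (nhds (f x)) := by
    refine Filter.Tendsto.mono_left ?_ nhdsWithin_le_nhds
    have : Continuous (fun ε : ℝ => (1 - ε) * f x + ε * c) := by fun_prop
    simpa using this.tendsto 0
  refine le_of_tendsto_of_tendsto h2 h1 ?_
  -- `ε < T⁻¹` makes `ε⁻¹ • lam` lie where the lower bound `c` holds.
  have hm : 0 < min 1 T⁻¹ := lt_min one_pos (inv_pos.2 hT)
  filter_upwards [Ioo_mem_nhdsGT hm] with ε hε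
  obtain ⟨hε0, hεm⟩ := hε
  have hε1 : ε < 1 := hεm.trans_le (min_le_left _ _)
  have hεT : T ≤ ε⁻¹ := (le_inv_comm₀ hT hε0).2 (hεm.trans_le (min_le_right _ _)).le
  have h3 := hconc.2 hx (hcone lam hlam ε⁻¹ (inv_pos.2 hε0)) (sub_nonneg.2 hε1.le) hε0.le
    (by ring)
  rw [smul_smul, mul_inv_cancel₀ hε0.ne', one_smul, smul_eq_mul, smul_eq_mul] at h3
  have h4 := mul_le_mul_of_nonneg_left (hc _ hεT) hε0.le
  linarith

/-- If `f` is smooth, symmetric and concave on `Γ`, `sup_Γ f = +∞`, and for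
every `λ ∈ Γ` the limit of `f(tλ)` as `t → +∞` is not `-∞`, then `f` satisfies condition (★). -/
theorem condStar_of_sup_infinite
    (n : ℕ) (hn : 1 ≤ n) (Γ : Set (Fin n → ℝ)) (hΓ : IsAdmissibleCone Γ)
    (f : (Fin n → ℝ) → ℝ) (hf : ContDiffOn ℝ (⊤ : ℕ∞) f Γ) (hsym : IsSymmetricOn f Γ)
    (hconc : ConcaveOn ℝ Γ f)
    (hsup : ∀ C : ℝ, ∃ x ∈ Γ, C < f x)
    (hbdd : ∀ lam ∈ Γ, ∃ c : ℝ, ∃ T : ℝ, 0 < T ∧ ∀ t : ℝ, T ≤ t → c ≤ f (t • lam)) :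
    CondStar f Γ := by
  obtain ⟨hopen, -, hcone, -⟩ := hΓ
  intro lam hlam mu _
  obtain ⟨x, hx, hfx⟩ := hsup (f mu)
  have hlim : Filter.Tendsto (fun t : ℝ => lam - t⁻¹ • x) Filter.atTop (nhds lam) := by
    have h0 : Filter.Tendsto (fun t : ℝ => t⁻¹ • x) Filter.atTop (nhds ((0 : ℝ) • x)) :=
      tendsto_inv_atTop_zero.smul_const x
    simpa using tendsto_const_nhds.sub h0
  obtain ⟨T, hT⟩ := Filter.eventually_atTop.1 (hlim.eventually (hopen.mem_nhds hlam))
  refine ⟨max T 1, by positivity, fun t ht => hfx.trans_le ?_⟩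
  have ht0 : 0 < t := one_pos.trans_le ((le_max_right _ _).trans ht)
  have hmem := hcone _ (hT t ((le_max_left _ _).trans ht)) t ht0
  have hle := le_add_of_mem_cone hopen hcone hf.continuousOn hconc hbdd hx hmem
  rwa [smul_sub, smul_smul, mul_inv_cancel₀ ht0.ne', one_smul, add_sub_cancel] at hle
end
end

section
/- Let Γ ⊂ ℝⁿ be an open symmetric convex cone as below, and let ϱ be a real constant with ϱ ≠ 0 and ϱ < ϱ_Γ. Then the set Γ̃, the image of Γ under the linear map T_ϱ, is again an open, symmetric, convex cone in ℝⁿ with vertex at the origin, and Γ̃ ⊆ Γ₁ := {λ ∈ ℝⁿ : Σᵢ λᵢ > 0}. -/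
/-!
The map `T_ϱ` preserves the sum of the coordinates, so the inclusion in `Γ₁` reduces to `Γ ⊆ Γ₁`.
If some `x ∈ Γ` had nonpositive sum, averaging its cyclic permutations would put a vector
`(c,…,c)` with `c ≤ 0` in `Γ`; together with `(1,…,1) ∈ Γ` and convexity this gives `0 ∈ Γ`, and an
open cone containing `0` is the whole space, contradicting `∂Γ ≠ ∅`.

Passing to the closure, `(1,…,1,1-ϱ_Γ)` has nonnegative sum `n - ϱ_Γ`, so `ϱ < ϱ_Γ ≤ n` and `T_ϱ`
is invertible. Hence `T_ϱ(Γ)` is the preimage of `Γ` under the inverse map, which is continuous,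
linear and commutes with permutations, so all the remaining properties pull back.
-/


open Finset

noncomputable section

/-- An open cone containing `0` is the whole space, so it has empty boundary. -/
theorem IsAdmissibleCone.zero_notMem {n : ℕ} {Γ : Set (Fin n → ℝ)} (hΓ : IsAdmissibleCone Γ) :
    (0 : Fin n → ℝ) ∉ Γ := by
  obtain ⟨ho, -, hs, -, -, hf⟩ := hΓ
  intro h0
  have huniv : Γ = Set.univ := by
    refine Set.eq_univ_of_forall fun x => ?_
    have hcont : Continuous fun t : ℝ => t • x := by fun_prop
    have hnhds : ∀ᶠ t : ℝ in nhds 0, t • x ∈ Γ :=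
      hcont.continuousAt.eventually_mem (ho.mem_nhds (by simpa using h0))
    obtain ⟨ε, hε, hball⟩ := Metric.eventually_nhds_iff.1 hnhds
    have hmem : (ε / 2) • x ∈ Γ := hball (by
      rw [Real.dist_eq, sub_zero, abs_of_pos (by positivity)]
      linarith)
    have := hs _ hmem (ε / 2)⁻¹ (by positivity)
    rwa [smul_smul, inv_mul_cancel₀ (by positivity), one_smul] at this
  rw [huniv, frontier_univ] at hf
  exact Set.not_nonempty_empty hf

/-- `Γ ⊆ Γ₁`: nonempty boundary forces every vector of the cone to have positive sum. -/
theorem IsAdmissibleCone.sum_pos {n : ℕ} (hn : 1 ≤ n) {Γ : Set (Fin n → ℝ)}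
    (hΓ : IsAdmissibleCone Γ) {x : Fin n → ℝ} (hx : x ∈ Γ) : 0 < ∑ i, x i := by
  by_contra! hneg
  have h0 := hΓ.zero_notMem
  obtain ⟨-, hc, -, hp, hpos, -⟩ := hΓ
  have : NeZero n := ⟨by omega⟩
  have hn0 : (0 : ℝ) < n := by exact_mod_cast hn
  -- The cyclic shifts of `x` already average to the constant vector.
  have havg : (fun _ => (n : ℝ)⁻¹ * ∑ i, x i) ∈ Γ := by
    have h := hc.sum_mem (t := Finset.univ) (w := fun _ : Fin n => (n : ℝ)⁻¹)
      (z := fun k => x ∘ Equiv.addLeft k) (fun _ _ => by positivity)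
      (by simp [hn0.ne']) (fun k _ => hp x hx _)
    convert h using 1
    ext i
    simp only [Finset.sum_apply, Pi.smul_apply, Function.comp, smul_eq_mul, ← Finset.mul_sum,
      Equiv.coe_addLeft]
    congr 1
    exact (Equiv.sum_comp (Equiv.addRight i) x).symm
  have hone : (fun _ => 1 : Fin n → ℝ) ∈ Γ := hpos fun _ => one_pos
  set c : ℝ := (n : ℝ)⁻¹ * ∑ i, x i
  have hc0 : c ≤ 0 := mul_nonpos_of_nonneg_of_nonpos (by positivity) hneg
  have h1c : 0 < 1 - c := by linarith
  have h := hc havg hone (a := 1 / (1 - c)) (b := -c / (1 - c)) (by positivity)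
    (div_nonneg (by linarith) h1c.le) (by field_simp; ring)
  apply h0
  convert h using 1
  ext i
  simp only [Pi.zero_apply, Pi.add_apply, Pi.smul_apply, smul_eq_mul]
  field_simp
  ring

theorem sum_Tmap {n : ℕ} {ϱ : ℝ} (hϱ0 : ϱ ≠ 0) (μ : Fin n → ℝ) :
    ∑ i, Tmap n ϱ μ i = ∑ i, μ i := by
  simp only [Tmap, ← Finset.mul_sum, Finset.sum_sub_distrib, Finset.sum_const, Finset.card_univ,
    Fintype.card_fin, nsmul_eq_mul]
  field_simp
  ring

theorem sum_TmapInv {n : ℕ} {ϱ : ℝ} (hϱn : ϱ < n) (x : Fin n → ℝ) :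
    ∑ i, TmapInv n ϱ x i = ∑ i, x i := by
  have : (n : ℝ) - ϱ ≠ 0 := by linarith
  simp only [TmapInv, ← Finset.mul_sum, Finset.sum_sub_distrib, Finset.sum_const, Finset.card_univ,
    Fintype.card_fin, nsmul_eq_mul]
  field_simp

/-- `TmapInv` is a two-sided inverse of `Tmap` as soon as `ϱ ≠ 0` and `ϱ < n`. -/
theorem Tmap_image_eq_preimage {n : ℕ} {ϱ : ℝ} (hϱ0 : ϱ ≠ 0) (hϱn : ϱ < n)
    (Γ : Set (Fin n → ℝ)) : Tmap n ϱ '' Γ = TmapInv n ϱ ⁻¹' Γ := by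
  have hne : (n : ℝ) - ϱ ≠ 0 := by linarith
  refine congrFun (Set.image_eq_preimage_of_inverse (fun μ => ?_) (fun x => ?_)) Γ
  · ext i
    rw [TmapInv, sum_Tmap hϱ0, Tmap]
    field_simp
    ring
  · ext i
    rw [Tmap, sum_TmapInv hϱn, TmapInv]
    field_simp
    ring

theorem sum_rhoVec {n : ℕ} (hn : 1 ≤ n) (ϱ : ℝ) : ∑ i, rhoVec n ϱ i = n - ϱ := by
  obtain ⟨m, rfl⟩ := Nat.exists_eq_add_of_le' hn
  rw [Fin.sum_univ_castSucc]
  have h : ∀ i : Fin m, rhoVec (m + 1) ϱ i.castSucc = 1 := fun i => by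
    simp [rhoVec, i.isLt.ne]
  simp only [h]
  simp [rhoVec]
  ring

/-- For `ϱ ≠ 0` with `ϱ < ϱ_Γ`, the image `Γ̃ = T_ϱ(Γ)` is again an open
symmetric convex cone with vertex at the origin, and `Γ̃ ⊆ Γ₁ = {λ : ∑ᵢ λᵢ > 0}`. -/
theorem image_cone_is_admissible
    (n : ℕ) (hn : 1 ≤ n) (Γ : Set (Fin n → ℝ)) (hΓ : IsAdmissibleCone Γ)
    (ϱΓ : ℝ) (hϱΓ : rhoVec n ϱΓ ∈ frontier Γ)
    (ϱ : ℝ) (hϱ0 : ϱ ≠ 0) (hϱ : ϱ < ϱΓ) :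
    IsOpen (Tmap n ϱ '' Γ) ∧
    (∀ x ∈ Tmap n ϱ '' Γ, ∀ σ : Equiv.Perm (Fin n), x ∘ σ ∈ Tmap n ϱ '' Γ) ∧
    Convex ℝ (Tmap n ϱ '' Γ) ∧
    (∀ x ∈ Tmap n ϱ '' Γ, ∀ t : ℝ, 0 < t → t • x ∈ Tmap n ϱ '' Γ) ∧
    Tmap n ϱ '' Γ ⊆ {x : Fin n → ℝ | 0 < ∑ i, x i} := by
  have hϱΓn : ϱΓ ≤ n := by
    have hclosed : IsClosed {x : Fin n → ℝ | 0 ≤ ∑ i, x i} :=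
      isClosed_le continuous_const (by fun_prop)
    have hsub : closure Γ ⊆ {x : Fin n → ℝ | 0 ≤ ∑ i, x i} :=
      closure_minimal (fun x hx => (hΓ.sum_pos hn hx).le) hclosed
    have h : 0 ≤ ∑ i, rhoVec n ϱΓ i := hsub (frontier_subset_closure hϱΓ)
    rw [sum_rhoVec hn] at h
    linarith
  have hsum : Tmap n ϱ '' Γ ⊆ {x : Fin n → ℝ | 0 < ∑ i, x i} := by
    rintro _ ⟨μ, hμ, rfl⟩
    change 0 < ∑ i, Tmap n ϱ μ i
    rw [sum_Tmap hϱ0]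
    exact hΓ.sum_pos hn hμ
  refine ⟨?_, ?_, ?_, ?_, hsum⟩ <;>
    rw [Tmap_image_eq_preimage hϱ0 (hϱ.trans_le hϱΓn)] <;>
    obtain ⟨ho, hc, hs, hp, -, -⟩ := hΓ
  · exact ho.preimage (by unfold TmapInv; fun_prop)
  · intro x hx σ
    have h : TmapInv n ϱ (x ∘ σ) = TmapInv n ϱ x ∘ σ := by
      ext i
      simp [TmapInv, Equiv.sum_comp σ x]
    rw [Set.mem_preimage, h]
    exact hp _ hx σ
  · intro x hx y hy a b ha hb hab
    have h : TmapInv n ϱ (a • x + b • y) = a • TmapInv n ϱ x + b • TmapInv n ϱ y := by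
      ext i
      simp only [TmapInv, Pi.add_apply, Pi.smul_apply, smul_eq_mul, Finset.sum_add_distrib,
        ← Finset.mul_sum]
      ring
    rw [Set.mem_preimage, h]
    exact hc hx hy ha hb hab
  · intro x hx t ht
    have h : TmapInv n ϱ (t • x) = t • TmapInv n ϱ x := by
      ext i
      simp only [TmapInv, Pi.smul_apply, smul_eq_mul, ← Finset.mul_sum]
      ring
    rw [Set.mem_preimage, h]
    exact hs _ hx t ht
end
end

section
/- Let Γ ⊂ ℝⁿ be an open symmetric convex cone as below and let ϱ be a real constant with ϱ ≠ 0 and ϱ < n. Then (1,…,1,1−ϱ) ∈ Γ if and only if (0,…,0,1) ∈ Γ̃. In particular, if ϱ < ϱ_Γ then Γ̃ is of type 2, i.e. (0,…,0,1) ∈ Γ̃. -/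
/-!
Since the coordinates of `rhoVec n ϱ` sum to `n - ϱ`, the map `T_ϱ` sends `rhoVec n ϱ` to
`(n - ϱ) • eLast n` (`Tmap_smul_rhoVec`). As `T_ϱ` is injective (`eq_of_Tmap_eq`) and `Γ` is a
cone, this is the stated equivalence.

For the second claim it remains to see that `ϱ < ϱΓ` puts `rhoVec n ϱ` in `Γ`
(`rhoVec_mem_of_lt`). If `ϱ ≤ 0`, it lies in the positive orthant. If `0 < ϱ < ϱΓ`, it is a proper
convex combination of the interior point `(1,…,1)` and the boundary point `rhoVec n ϱΓ`, hence is
interior.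
-/

open Finset

noncomputable section

theorem sum_eLast {n : ℕ} (hn : 1 ≤ n) : ∑ i, eLast n i = 1 := by
  rw [Finset.sum_eq_single (⟨n - 1, by omega⟩ : Fin n)]
  · simp [eLast]
  · intro b _ hb
    have : (b : ℕ) ≠ n - 1 := fun h => hb (Fin.ext h)
    simp [eLast, this]
  · simp

theorem rhoVec_apply (n : ℕ) (ϱ : ℝ) (i : Fin n) : rhoVec n ϱ i = 1 - ϱ * eLast n i := by
  unfold rhoVec eLast
  split_ifs <;> simp

theorem Tmap_smul_rhoVec {n : ℕ} (hn : 1 ≤ n) {ϱ : ℝ} (hϱ0 : ϱ ≠ 0) (hϱn : ϱ < (n : ℝ)) :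
    Tmap n ϱ (((n : ℝ) - ϱ)⁻¹ • rhoVec n ϱ) = eLast n := by
  have h : (n : ℝ) - ϱ ≠ 0 := (sub_pos.2 hϱn).ne'
  funext i
  simp only [Tmap, Pi.smul_apply, smul_eq_mul, ← Finset.mul_sum, sum_rhoVec hn]
  rw [rhoVec_apply]
  field_simp
  ring

theorem eq_of_Tmap_eq {n : ℕ} {ϱ : ℝ} (hϱ0 : ϱ ≠ 0) (hϱn : ϱ < (n : ℝ)) {μ ν : Fin n → ℝ}
    (h : Tmap n ϱ μ = Tmap n ϱ ν) : μ = ν := by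
  have hs : ∑ i, μ i = ∑ i, ν i := by
    rw [← sum_Tmap hϱ0 μ, ← sum_Tmap hϱ0 ν, h]
  funext i
  have hi := mul_left_cancel₀ (inv_ne_zero hϱ0) (congrFun h i)
  rw [hs] at hi
  exact mul_left_cancel₀ (sub_pos.2 hϱn).ne' (sub_right_injective hi)

theorem rhoVec_mem_of_lt {n : ℕ} {Γ : Set (Fin n → ℝ)} (hΓ : IsAdmissibleCone Γ) {ϱΓ ϱ : ℝ}
    (hϱΓ : rhoVec n ϱΓ ∈ frontier Γ) (hlt : ϱ < ϱΓ) : rhoVec n ϱ ∈ Γ := by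
  obtain ⟨hopen, hconv, -, -, hpos, -⟩ := hΓ
  rcases le_or_gt ϱ 0 with h0 | h0
  · apply hpos
    intro i
    simp only [rhoVec]
    split_ifs <;> linarith
  · have hΓ0 : 0 < ϱΓ := h0.trans hlt
    have h1 : (fun _ => 1 : Fin n → ℝ) ∈ interior Γ := by
      rw [hopen.interior_eq]
      exact hpos fun _ => one_pos
    -- The weight `ϱ / ϱΓ` is forced by the last coordinate, `1 - (ϱ / ϱΓ) * ϱΓ = 1 - ϱ`.
    have hc := hconv.combo_closure_interior_mem_interior (frontier_subset_closure hϱΓ) h1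
      (a := ϱ / ϱΓ) (b := 1 - ϱ / ϱΓ) (by positivity)
      (sub_pos.2 ((div_lt_one hΓ0).2 hlt)) (by ring)
    convert interior_subset hc using 1
    funext i
    simp only [Pi.add_apply, Pi.smul_apply, smul_eq_mul, rhoVec_apply]
    field_simp
    ring

/-- For `ϱ ≠ 0` with `ϱ < n`: `(1,…,1,1-ϱ) ∈ Γ` iff `(0,…,0,1) ∈ Γ̃`.
In particular, if `ϱ < ϱ_Γ` then `Γ̃` is of type 2, i.e. `(0,…,0,1) ∈ Γ̃`. -/
theorem rhoVec_mem_iff_eLast_mem_image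
    (n : ℕ) (hn : 1 ≤ n) (Γ : Set (Fin n → ℝ)) (hΓ : IsAdmissibleCone Γ)
    (ϱΓ : ℝ) (hϱΓ : rhoVec n ϱΓ ∈ frontier Γ)
    (ϱ : ℝ) (hϱ0 : ϱ ≠ 0) (hϱn : ϱ < (n : ℝ)) :
    (rhoVec n ϱ ∈ Γ ↔ eLast n ∈ Tmap n ϱ '' Γ) ∧
    (ϱ < ϱΓ → eLast n ∈ Tmap n ϱ '' Γ) := by
  have hd : 0 < (n : ℝ) - ϱ := sub_pos.2 hϱn
  have hcone := hΓ.2.2.1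
  have hiff : rhoVec n ϱ ∈ Γ ↔ eLast n ∈ Tmap n ϱ '' Γ := by
    constructor
    · intro h
      exact ⟨_, hcone _ h _ (inv_pos.2 hd), Tmap_smul_rhoVec hn hϱ0 hϱn⟩
    · rintro ⟨μ, hμ, hT⟩
      have hμ' : μ = ((n : ℝ) - ϱ)⁻¹ • rhoVec n ϱ :=
        eq_of_Tmap_eq hϱ0 hϱn (hT.trans (Tmap_smul_rhoVec hn hϱ0 hϱn).symm)
      have h := hcone μ hμ _ hd
      rwa [hμ', smul_inv_smul₀ hd.ne'] at h
  exact ⟨hiff, fun hlt => hiff.1 (rhoVec_mem_of_lt hΓ hϱΓ hlt)⟩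
end
end

section
/- Let Γ ⊂ ℝⁿ be an open symmetric convex cone as below, and suppose Γ is of type 1, i.e. (0,…,0,1) ∈ ∂Γ. Then for every λ ∈ Γ and every index 1 ≤ i ≤ n, one has Σ_{j ≠ i} λⱼ > 0. -/
/-!
If `λ ∈ Γ` satisfied `∑_{j ≠ i} λⱼ ≤ 0`, then summing `λ ∘ σ` over all permutations `σ` fixing `i`
would give a vector of `Γ` whose coordinates other than the `i`-th all equal the same multiple of
`∑_{j ≠ i} λⱼ`, hence are nonpositive (`stabilizerSum_apply_nonpos`). After scaling, this vector
lies below the unit vector `eᵢ` coordinatewise. Since `Γ` is open and stable under adding positive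
vectors, it is upward closed (`IsAdmissibleCone.mem_of_le`), so `eᵢ ∈ Γ` and, by symmetry,
`(0,…,0,1) ∈ Γ`. But an open set is disjoint from its frontier, which contradicts type 1.
-/

open Finset

noncomputable section

theorem IsAdmissibleCone.add_mem {n : ℕ} {Γ : Set (Fin n → ℝ)} (hΓ : IsAdmissibleCone Γ)
    {x y : Fin n → ℝ} (hx : x ∈ Γ) (hy : y ∈ Γ) : x + y ∈ Γ := by
  obtain ⟨-, hconv, hcone, -⟩ := hΓ
  have h := hcone _ (hconv hx hy (a := 1 / 2) (b := 1 / 2) (by norm_num) (by norm_num)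
    (by norm_num)) 2 two_pos
  convert h using 1
  ext i
  simp only [Pi.add_apply, Pi.smul_apply, smul_eq_mul]
  ring

/-- `Γ` is upward closed for the coordinatewise order: openness leaves room to lower `v` by a
small `ε` in every coordinate, so that `w` minus the lowered vector is strictly positive. -/
theorem IsAdmissibleCone.mem_of_le {n : ℕ} {Γ : Set (Fin n → ℝ)} (hΓ : IsAdmissibleCone Γ)
    {v w : Fin n → ℝ} (hv : v ∈ Γ) (hvw : ∀ j, v j ≤ w j) : w ∈ Γ := by
  have hcont : Continuous fun ε : ℝ => (fun j => v j - ε : Fin n → ℝ) := by fun_prop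
  have hnhds : ∀ᶠ ε in nhds (0 : ℝ), (fun j => v j - ε) ∈ Γ :=
    (hΓ.1.preimage hcont).mem_nhds (by simpa using hv)
  obtain ⟨ε, hmem, hε⟩ :=
    ((hnhds.filter_mono nhdsWithin_le_nhds).and
      (self_mem_nhdsWithin : ∀ᶠ ε in nhdsWithin (0 : ℝ) (Set.Ioi 0), ε ∈ Set.Ioi 0)).exists
  have hε : 0 < ε := hε
  have hpos : (fun j => w j - (v j - ε)) ∈ Γ :=
    hΓ.2.2.2.2.1 fun j => by linarith [hvw j]
  convert hΓ.add_mem hmem hpos using 1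
  ext j
  simp

/-- The sum of `lam ∘ σ` over all permutations `σ` fixing the index `i`. -/
def stabilizerSum {n : ℕ} (lam : Fin n → ℝ) (i : Fin n) : Fin n → ℝ :=
  ∑ σ : Equiv.Perm (Fin n) with σ i = i, lam ∘ σ

theorem IsAdmissibleCone.stabilizerSum_mem {n : ℕ} {Γ : Set (Fin n → ℝ)}
    (hΓ : IsAdmissibleCone Γ) {lam : Fin n → ℝ} (hlam : lam ∈ Γ) (i : Fin n) :
    stabilizerSum lam i ∈ Γ :=
  Finset.sum_induction_nonempty _ (· ∈ Γ) (fun _ _ => hΓ.add_mem) ⟨1, by simp⟩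
    fun σ _ => hΓ.2.2.2.1 lam hlam σ

/-- Composing with the transposition of `j` and `k` permutes the stabilizer of `i`. -/
theorem stabilizerSum_apply_eq {n : ℕ} (lam : Fin n → ℝ) {i j k : Fin n} (hj : j ≠ i)
    (hk : k ≠ i) : stabilizerSum lam i j = stabilizerSum lam i k := by
  simp only [stabilizerSum, Finset.sum_apply, Function.comp_apply]
  refine Finset.sum_equiv (Equiv.mulRight (Equiv.swap j k)) (fun σ => ?_) (fun σ _ => ?_)
  · simp [Equiv.swap_apply_of_ne_of_ne hj.symm hk.symm]
  · simp

theorem sum_erase_stabilizerSum {n : ℕ} (lam : Fin n → ℝ) (i : Fin n) :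
    ∑ j ∈ Finset.univ.erase i, stabilizerSum lam i j =
      (#{σ : Equiv.Perm (Fin n) | σ i = i} : ℝ) * ∑ j ∈ Finset.univ.erase i, lam j := by
  simp only [stabilizerSum, Finset.sum_apply, Function.comp_apply]
  rw [Finset.sum_comm, ← nsmul_eq_mul]
  refine Finset.sum_eq_card_nsmul fun σ hσ => ?_
  have hσ : σ i = i := by simpa using hσ
  refine Finset.sum_equiv σ (fun j => ?_) (fun _ _ => rfl)
  simp only [Finset.mem_erase, Finset.mem_univ, and_true]
  rw [not_iff_not, ← σ.injective.eq_iff (a := j), hσ]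

theorem stabilizerSum_apply_nonpos {n : ℕ} {lam : Fin n → ℝ} {i j : Fin n}
    (h : ∑ j ∈ Finset.univ.erase i, lam j ≤ 0) (hj : j ≠ i) : stabilizerSum lam i j ≤ 0 := by
  have hsum := sum_erase_stabilizerSum lam i
  rw [Finset.sum_eq_card_nsmul fun k hk => stabilizerSum_apply_eq lam (Finset.ne_of_mem_erase hk) hj,
    nsmul_eq_mul] at hsum
  have hcard : (0 : ℝ) < #(Finset.univ.erase i) :=
    Nat.cast_pos.2 (Finset.card_pos.2 ⟨j, by simp [hj]⟩)
  refine nonpos_of_mul_nonpos_right ?_ hcard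
  rw [hsum]
  exact mul_nonpos_of_nonneg_of_nonpos (Nat.cast_nonneg _) h

/-- If `Γ` is of type 1, i.e. `(0,…,0,1) ∈ ∂Γ`, then for every `λ ∈ Γ` and
every index `i`, `∑_{j ≠ i} λⱼ > 0`. -/
theorem sum_erase_pos_of_type_one
    (n : ℕ) (hn : 1 ≤ n) (Γ : Set (Fin n → ℝ)) (hΓ : IsAdmissibleCone Γ)
    (htype1 : eLast n ∈ frontier Γ) :
    ∀ lam ∈ Γ, ∀ i : Fin n, 0 < ∑ j ∈ Finset.univ.erase i, lam j := by
  intro lam hlam i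
  by_contra! hle
  set v := stabilizerSum lam i with hv
  have hvΓ : v ∈ Γ := hΓ.stabilizerSum_mem hlam i
  have habs : 0 < 1 + |v i| := by positivity
  -- The factor `(1 + |vᵢ|)⁻¹` makes the `i`-th coordinate at most `1`.
  have hei : (Pi.single i 1 : Fin n → ℝ) ∈ Γ := by
    refine hΓ.mem_of_le (hΓ.2.2.1 v hvΓ (1 + |v i|)⁻¹ (inv_pos.2 habs)) fun j => ?_
    rw [Pi.smul_apply, smul_eq_mul]
    rcases eq_or_ne j i with rfl | hj
    · rw [Pi.single_eq_same, inv_mul_le_iff₀ habs]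
      linarith [le_abs_self (v j)]
    · rw [Pi.single_eq_of_ne hj]
      exact mul_nonpos_of_nonneg_of_nonpos (inv_pos.2 habs).le (stabilizerSum_apply_nonpos hle hj)
  have hlast : eLast n ∈ Γ := by
    convert hΓ.2.2.2.1 _ hei (Equiv.swap i ⟨n - 1, by omega⟩) using 1
    ext j
    simp only [eLast, Function.comp_apply, Pi.single_apply, Equiv.swap_apply_eq_iff,
      Equiv.swap_apply_left, Fin.ext_iff]
  exact (hΓ.1.inter_frontier_eq ▸ ⟨hlast, htype1⟩ : eLast n ∈ (∅ : Set (Fin n → ℝ)))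
end
end

section
/- Let n ≥ 3, let Γ ⊂ ℝⁿ be an open symmetric convex cone as below of type 1, and let A be a real symmetric n×n matrix such that the vector of eigenvalues of −A (listed in any order) belongs to Γ. Then the matrix (n−2)·(A − tr(A)·Id) is positive definite. (When A is the Schouten tensor Aₘ of a metric g in an orthonormal frame, (n−2)(A − tr(A)·Id) is the Einstein tensor Gₘ = Ricₘ − (Rₘ/2)g, so this says: if λ(−g⁻¹Aₘ) ∈ Γ then Gₘ > 0.) -/
/-!
The matrix `A - tr(A) • 1` is `(∑ⱼ λⱼ) • 1 - (-A)`, where `λ` is the eigenvalue vector of `-A`, so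
by the spectral theorem it is orthogonally conjugate to the diagonal matrix with entries
`∑_{j ≠ i} λⱼ`. It therefore suffices that every point `λ` of a type 1 cone satisfies
`0 < ∑_{j ≠ i} λⱼ` for each `i` (`IsAdmissibleCone.sum_erase_pos`).

Suppose instead that `∑_{j ≠ i} λⱼ ≤ 0`. Symmetrizing `λ` over the permutations fixing `i` gives a
point of `Γ` whose coordinates off `i` are all nonpositive
(`IsAdmissibleCone.exists_nonpos_off`). Since `Γ` is open and stable under adding positive
vectors, it then contains the `i`-th unit vector (`IsAdmissibleCone.single_mem`), hence by symmetry
also `(0,…,0,1)`. An open set does not meet its frontier, which contradicts type 1.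
-/

open Finset

noncomputable section

/-- Averaging: summing `x ∘ σ` over the stabilizer of the index `i` makes all the coordinates
other than `i` equal, so they are all nonpositive as soon as their sum is. -/
theorem IsAdmissibleCone.exists_nonpos_off {n : ℕ} {Γ : Set (Fin n → ℝ)}
    (hΓ : IsAdmissibleCone Γ) {x : Fin n → ℝ} (hx : x ∈ Γ) (i : Fin n)
    (hsum : ∑ j ∈ univ.erase i, x j ≤ 0) : ∃ v ∈ Γ, ∀ j, j ≠ i → v j ≤ 0 := by
  classical
  set S : Finset (Equiv.Perm (Fin n)) := univ.filter fun σ => σ i = i with hS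
  have hSne : S.Nonempty := ⟨1, by simp [hS]⟩
  refine ⟨∑ σ ∈ S, x ∘ σ, ?_, ?_⟩
  · exact Finset.sum_induction_nonempty _ (· ∈ Γ) (fun a b ha hb => hΓ.add_mem ha hb) hSne
      (fun σ _ => hΓ.2.2.2.1 x hx σ)
  intro j hj
  -- Right multiplication by a transposition fixing `i` permutes the stabilizer.
  have heq : ∀ k ∈ univ.erase i, (∑ σ ∈ S, x (σ k)) = ∑ σ ∈ S, x (σ j) := by
    intro k hk
    have hki : k ≠ i := Finset.ne_of_mem_erase hk
    have hfix : Equiv.swap j k i = i := Equiv.swap_apply_of_ne_of_ne hj.symm hki.symm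
    refine Finset.sum_bij' (fun σ _ => σ * Equiv.swap j k) (fun σ _ => σ * Equiv.swap j k)
      ?_ ?_ ?_ ?_ ?_
    · intro σ hσ
      simpa [hS, hfix] using hσ
    · intro σ hσ
      simpa [hS, hfix] using hσ
    · intro σ _
      simp [mul_assoc]
    · intro σ _
      simp [mul_assoc]
    · intro σ _
      simp
  have hrow : ∀ σ ∈ S, ∑ k ∈ univ.erase i, x (σ k) = ∑ k ∈ univ.erase i, x k := by
    intro σ hσ
    have hσi : σ i = i := by simpa [hS] using hσ
    have h1 := Finset.add_sum_erase univ (fun k => x (σ k)) (Finset.mem_univ i)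
    have h2 := Finset.add_sum_erase univ x (Finset.mem_univ i)
    have h3 := Equiv.sum_comp σ x
    simp only [hσi] at h1
    linarith
  have hle : ∑ k ∈ univ.erase i, ∑ σ ∈ S, x (σ k) ≤ 0 := by
    rw [Finset.sum_comm, Finset.sum_congr rfl hrow, Finset.sum_const]
    exact nsmul_nonpos hsum _
  rw [Finset.sum_congr rfl heq, Finset.sum_const, nsmul_eq_mul] at hle
  have hcard : (0 : ℝ) < ((univ.erase i).card : ℝ) := by
    exact_mod_cast Finset.card_pos.mpr ⟨j, by simp [hj]⟩
  have := nonpos_of_mul_nonpos_right hle hcard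
  simpa [Finset.sum_apply] using this

/-- Openness leaves room to lower every coordinate of `v` by some `δ > 0`; adding a suitable
vector of the positive orthant then lands on a positive multiple of the `i`-th unit vector. -/
theorem IsAdmissibleCone.single_mem {n : ℕ} {Γ : Set (Fin n → ℝ)}
    (hΓ : IsAdmissibleCone Γ) {v : Fin n → ℝ} (hv : v ∈ Γ) (i : Fin n)
    (hoff : ∀ j, j ≠ i → v j ≤ 0) : (Pi.single i 1 : Fin n → ℝ) ∈ Γ := by
  have hcont : Continuous fun t : ℝ => fun j => v j - t := by fun_prop
  have hnhds : {t : ℝ | (fun j => v j - t) ∈ Γ} ∈ nhds (0 : ℝ) :=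
    (hΓ.1.preimage hcont).mem_nhds (by simpa using hv)
  obtain ⟨ε, hε, hball⟩ := Metric.mem_nhds_iff.mp hnhds
  have hδ : (fun j => v j - ε / 2) ∈ Γ :=
    hball (by simp [abs_of_pos hε, hε])
  set R : ℝ := |v i| + 1 with hR
  have hRpos : 0 < R := by positivity
  have hw : (fun j => if j = i then R - v i + ε / 2 else ε / 2 - v j) ∈ Γ := by
    apply hΓ.2.2.2.2.1
    intro j
    dsimp only
    split_ifs with h
    · have := le_abs_self (v i)
      linarith
    · have := hoff j h
      linarith
  have hmem := hΓ.2.2.1 _ (hΓ.add_mem hδ hw) R⁻¹ (inv_pos.mpr hRpos)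
  convert hmem using 1
  ext j
  by_cases h : j = i
  · subst h
    simp
    field_simp
  · simp [h]

/-- Deleting any one coordinate of a point of a type 1 cone leaves a positive sum. -/
theorem IsAdmissibleCone.sum_erase_pos {n : ℕ} (hn : 3 ≤ n) {Γ : Set (Fin n → ℝ)}
    (hΓ : IsAdmissibleCone Γ) (htype1 : eLast n ∈ frontier Γ) {x : Fin n → ℝ} (hx : x ∈ Γ)
    (i : Fin n) : 0 < ∑ j ∈ univ.erase i, x j := by
  by_contra! hsum
  obtain ⟨v, hv, hoff⟩ := hΓ.exists_nonpos_off hx i hsum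
  have hi := hΓ.single_mem hv i hoff
  have hlast := hΓ.2.2.2.1 _ hi (Equiv.swap i ⟨n - 1, by omega⟩)
  have heq : (Pi.single i 1 : Fin n → ℝ) ∘ Equiv.swap i ⟨n - 1, by omega⟩ = eLast n := by
    ext j
    simp only [Function.comp_apply, eLast, Pi.single_apply, Equiv.swap_apply_eq_iff,
      Equiv.swap_apply_left, Fin.ext_iff]
  rw [heq] at hlast
  rw [hΓ.1.frontier_eq] at htype1
  exact htype1.2 hlast

/-- If `Γ` is of type 1, `A` is a real symmetric `n × n` matrix (`n ≥ 3`)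
and the eigenvalue vector of `-A` belongs to `Γ`, then `(n-2)·(A - tr(A)·Id)` is positive
definite. (For the Schouten tensor this is the Einstein tensor `G = Ric - (R/2) g`.) -/
theorem einstein_tensor_posDef_of_type_one
    (n : ℕ) (hn : 3 ≤ n) (Γ : Set (Fin n → ℝ)) (hΓ : IsAdmissibleCone Γ)
    (htype1 : eLast n ∈ frontier Γ)
    (A : Matrix (Fin n) (Fin n) ℝ) (hsymm : A.IsSymm)
    (hA : (-A).IsHermitian) (hev : hA.eigenvalues ∈ Γ) :
    (((n : ℝ) - 2) • (A - (Matrix.trace A) • (1 : Matrix (Fin n) (Fin n) ℝ))).PosDef := by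
  have hn' : (3 : ℝ) ≤ n := by exact_mod_cast hn
  refine Matrix.PosDef.smul ?_ (by linarith)
  set lam := hA.eigenvalues with hlam
  set U : Matrix (Fin n) (Fin n) ℝ := hA.eigenvectorUnitary.1 with hU
  have hUU : U * star U = 1 := Unitary.coe_mul_star_self hA.eigenvectorUnitary
  have hUunit : IsUnit U :=
    (Matrix.isUnit_iff_isUnit_det _).mpr (Matrix.isUnit_det_of_right_inverse hUU)
  have htrace : Matrix.trace A = -∑ j, lam j := by
    have h := hA.trace_eq_sum_eigenvalues
    rw [Matrix.trace_neg] at h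
    simp only [RCLike.ofReal_real_eq_id, id_eq] at h
    linarith
  have hspec : -A = U * Matrix.diagonal lam * star U := by
    have h := hA.spectral_theorem
    rw [Unitary.conjStarAlgAut_apply] at h
    exact h
  have hdiag : Matrix.diagonal (fun i => ∑ j ∈ univ.erase i, lam j)
      = (∑ j, lam j) • (1 : Matrix (Fin n) (Fin n) ℝ) - Matrix.diagonal lam := by
    rw [Matrix.smul_one_eq_diagonal, Matrix.diagonal_sub]
    congr 1
    ext i
    have h := Finset.add_sum_erase univ lam (Finset.mem_univ i)
    linarith
  have hconj : A - Matrix.trace A • (1 : Matrix (Fin n) (Fin n) ℝ)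
      = U * Matrix.diagonal (fun i => ∑ j ∈ univ.erase i, lam j) * star U := by
    rw [hdiag, mul_sub, sub_mul, ← hspec, Matrix.mul_smul, Matrix.smul_mul, mul_one, hUU, htrace,
      neg_smul]
    abel
  rw [hconj, Matrix.IsUnit.posDef_star_right_conjugate_iff hUunit, Matrix.posDef_diagonal_iff]
  exact hΓ.sum_erase_pos hn htype1 hev
end
end

section
/- Let Γ ⊂ ℝⁿ be an open symmetric convex cone as below. Then for every 1 ≤ k ≤ n−1, the projection of Γ onto the first k coordinates equals {(λ₁,…,λ_k) ∈ ℝᵏ : (λ₁,…,λ_k, R, …, R) ∈ Γ for some R > 0}; that is, {λ ∈ ℝᵏ : ∃ μ ∈ ℝ^{n−k}, (λ,μ) ∈ Γ} = {λ ∈ ℝᵏ : ∃ R > 0, (λ,R,…,R) ∈ Γ}. -/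
/-!
An open convex cone containing the positive orthant is closed under addition, hence under adding
any vector of the *closed* positive orthant: a point `x ∈ Γ` may first be lowered slightly in every
coordinate (openness), after which the vector to be added becomes strictly positive. So `Γ` is
upward closed for the coordinatewise order, and if `(λ, μ) ∈ Γ` then `(λ, R, …, R) ∈ Γ` for every
`R` exceeding all coordinates of `μ`.
-/

open Finset

noncomputable section

/-- Glue a vector `lam ∈ ℝᵏ` with a vector `rest ∈ ℝⁿ` on the remaining coordinates:
the `i`-th coordinate is `lam i` if `i < k` and `rest i` otherwise. -/
def glueVec (n k : ℕ) (lam : Fin k → ℝ) (rest : Fin n → ℝ) : Fin n → ℝ :=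
  fun i => if h : (i : ℕ) < k then lam ⟨(i : ℕ), h⟩ else rest i

/-- An admissible cone is upward closed for the coordinatewise order. -/
theorem IsAdmissibleCone.mem_of_le_s11 {n : ℕ} {Γ : Set (Fin n → ℝ)} (hΓ : IsAdmissibleCone Γ)
    {x y : Fin n → ℝ} (hx : x ∈ Γ) (hxy : x ≤ y) : y ∈ Γ := by
  obtain ⟨hopen, hconv, hcone, -, hpos, -⟩ := hΓ
  obtain ⟨ε, hε, hball⟩ := Metric.isOpen_iff.1 hopen x hx
  have hx' : (fun i => x i - ε / 2) ∈ Γ := by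
    apply hball
    rw [Metric.mem_ball, dist_pi_lt_iff hε]
    intro i
    rw [Real.dist_eq, abs_lt]
    constructor <;> linarith
  have hp : (fun i => y i - x i + ε / 2) ∈ Γ := by
    apply hpos
    intro i
    have := hxy i
    linarith
  -- `y` is twice the midpoint of the two vectors above
  have hmid := hcone _ (hconv hx' hp (a := 1 / 2) (b := 1 / 2) (by norm_num) (by norm_num)
    (by norm_num)) 2 (by norm_num)
  convert hmid using 1
  funext i
  simp only [Pi.smul_apply, Pi.add_apply, smul_eq_mul]
  ring

/-- For `1 ≤ k ≤ n - 1`, the projection of `Γ` onto the first `k`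
coordinates equals `{λ ∈ ℝᵏ : (λ, R, …, R) ∈ Γ for some R > 0}`. -/
theorem projection_eq_constant_tail
    (n k : ℕ) (hk : 1 ≤ k) (hkn : k ≤ n - 1) (hn : 1 ≤ n)
    (Γ : Set (Fin n → ℝ)) (hΓ : IsAdmissibleCone Γ) :
    {lam : Fin k → ℝ | ∃ rest : Fin n → ℝ, glueVec n k lam rest ∈ Γ} =
      {lam : Fin k → ℝ | ∃ R : ℝ, 0 < R ∧ glueVec n k lam (fun _ => R) ∈ Γ} := by
  ext lam
  constructor
  · rintro ⟨rest, hrest⟩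
    have hnonneg : 0 ≤ ∑ i, |rest i| := Finset.sum_nonneg fun i _ => abs_nonneg _
    refine ⟨1 + ∑ i, |rest i|, by linarith, hΓ.mem_of_le_s11 hrest fun i => ?_⟩
    unfold glueVec
    split_ifs
    · exact le_rfl
    · have h1 : |rest i| ≤ ∑ j, |rest j| :=
        Finset.single_le_sum (f := fun j => |rest j|) (fun j _ => abs_nonneg _)
          (Finset.mem_univ i)
      have h2 := le_abs_self (rest i)
      linarith
  · rintro ⟨R, -, hR⟩
    exact ⟨_, hR⟩
end
end

section
/- Let Γ ⊂ ℝⁿ be an open symmetric convex cone as below with n ≥ 3, and suppose κ_Γ ≤ n−3. Then 1 + (n−2)/ϱ_Γ ≥ 2, i.e. ϱ_Γ ≤ n−2. -/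
/-!
Suppose `ϱ > n - 2`. Adding a suitable `ε > 0` to every entry of the boundary vector
`(1,…,1,1-ϱ)` gives a vector of the open cone. Moving its last entry to each of the first `n-2`
positions in turn and averaging these `n-2` vectors yields, when `(n-2) ε = ϱ - (n-2)`, a positive
multiple of `(0,…,0,1,1)`. So `(0,…,0,1,1) ∈ Γ`, which contradicts `κ ≤ n - 3`.
The division form of the bound needs `ϱ > 0`, which holds since otherwise `(1,…,1,1-ϱ)` would lie
in the positive orthant, hence in the interior of `Γ`.
-/

open Finset

noncomputable section

/-- A convex cone absorbs its closure: `closure Γ + Γ ⊆ Γ` when `Γ` is open. -/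
lemma closure_add_mem {n : ℕ} {Γ : Set (Fin n → ℝ)} (ho : IsOpen Γ) (hc : Convex ℝ Γ)
    (hs : ∀ x ∈ Γ, ∀ t : ℝ, 0 < t → t • x ∈ Γ) {x y : Fin n → ℝ}
    (hx : x ∈ closure Γ) (hy : y ∈ Γ) : x + y ∈ Γ := by
  have h := hc.combo_closure_interior_mem_interior hx (ho.interior_eq.symm ▸ hy)
    (by norm_num : (0 : ℝ) ≤ 1 / 2) (by norm_num : (0 : ℝ) < 1 / 2) (by norm_num)
  rw [ho.interior_eq] at h
  convert hs _ h 2 (by norm_num) using 1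
  rw [← smul_add, smul_smul]
  norm_num

/-- Averaging step: the hypothesis on `a`, `b` says that the average over the first `m` positions
of the placements of the entry `a` among entries `b` vanishes in those positions. -/
lemma zeroOneVec_mem_of_mem {m : ℕ} (hm : 1 ≤ m) {Γ : Set (Fin (m + 2) → ℝ)}
    (hc : Convex ℝ Γ) (hs : ∀ x ∈ Γ, ∀ t : ℝ, 0 < t → t • x ∈ Γ)
    (hp : ∀ x ∈ Γ, ∀ σ : Equiv.Perm (Fin (m + 2)), x ∘ σ ∈ Γ) {a b : ℝ} (hb : 0 < b)
    (hab : a + ((m : ℝ) - 1) * b = 0)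
    (h : (fun i : Fin (m + 2) => if (i : ℕ) = m + 1 then a else b) ∈ Γ) :
    zeroOneVec (m + 2) m ∈ Γ := by
  have hm0 : (0 : ℝ) < m := by exact_mod_cast hm
  have hu : ∀ j : Fin m,
      (fun i : Fin (m + 2) => if i = Fin.castAdd 2 j then a else b) ∈ Γ := by
    intro j
    convert hp _ h (Equiv.swap (Fin.castAdd 2 j) (Fin.last (m + 1))) using 1
    funext i
    have hv : ∀ k : Fin (m + 2), (k : ℕ) = m + 1 ↔ k = Fin.last (m + 1) := fun k => by
      simp [Fin.ext_iff]
    simp only [Function.comp, hv, Equiv.swap_apply_eq_iff, Equiv.swap_apply_right]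
  have havg := hc.sum_mem (t := Finset.univ) (w := fun _ : Fin m => (m : ℝ)⁻¹)
    (fun _ _ => by positivity) (by simp [hm0.ne']) (fun j _ => hu j)
  convert hs _ havg b⁻¹ (by positivity) using 1
  funext i
  simp only [zeroOneVec, Pi.smul_apply, Finset.sum_apply, smul_eq_mul, ← Finset.mul_sum]
  split_ifs with hi
  · obtain ⟨k, rfl⟩ : ∃ k : Fin m, i = Fin.castAdd 2 k := ⟨⟨i, hi⟩, rfl⟩
    have : ∑ j : Fin m, (if Fin.castAdd 2 k = Fin.castAdd 2 j then a else b)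
        = ∑ j : Fin m, (b + if k = j then a - b else 0) := by
      refine Finset.sum_congr rfl fun j _ => ?_
      by_cases hkj : k = j <;> simp [hkj]
    rw [this, Finset.sum_add_distrib]
    simp only [Finset.sum_const, Finset.card_univ, Fintype.card_fin, nsmul_eq_mul,
      Finset.sum_ite_eq, Finset.mem_univ, if_true]
    rw [show (m : ℝ) * b + (a - b) = 0 by linarith]
    simp
  · have : ∀ j : Fin m, i ≠ Fin.castAdd 2 j := fun j hj => hi (by simp [hj])
    simp only [this, if_false, Finset.sum_const, Finset.card_univ, Fintype.card_fin, nsmul_eq_mul]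
    field_simp

/-- If `n ≥ 3` and `κ_Γ ≤ n - 3`, then `1 + (n-2)/ϱ_Γ ≥ 2`, i.e.
`ϱ_Γ ≤ n - 2`. -/
theorem rho_le_of_kappa_le
    (n : ℕ) (hn : 3 ≤ n) (Γ : Set (Fin n → ℝ)) (hΓ : IsAdmissibleCone Γ)
    (κ : ℕ) (hκ : IsGreatest {k : ℕ | k ≤ n - 1 ∧ zeroOneVec n k ∈ Γ} κ)
    (hκ3 : κ ≤ n - 3)
    (ϱΓ : ℝ) (hϱΓ : rhoVec n ϱΓ ∈ frontier Γ) :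
    2 ≤ 1 + ((n : ℝ) - 2) / ϱΓ ∧ ϱΓ ≤ (n : ℝ) - 2 := by
  obtain ⟨ho, hc, hs, hp, hpos, -⟩ := hΓ
  obtain ⟨m, rfl⟩ : ∃ m, n = m + 2 := ⟨n - 2, by omega⟩
  have hm : 1 ≤ m := by omega
  have hm0 : (0 : ℝ) < m := by exact_mod_cast hm
  have hϱ0 : 0 < ϱΓ := by
    by_contra! hneg
    rw [ho.frontier_eq] at hϱΓ
    refine hϱΓ.2 (hpos fun i => ?_)
    simp only [rhoVec]
    split_ifs <;> linarith
  have hϱ : ϱΓ ≤ m := by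
    by_contra! hlt
    -- The shift `ε = (ϱ - m) / m` makes the averaged entries vanish; then `1 + ε = ϱ / m`.
    have hε : 0 < ϱΓ / m - 1 := by
      rw [sub_pos, lt_div_iff₀ hm0]
      linarith
    have hmem := closure_add_mem ho hc hs (frontier_subset_closure hϱΓ)
      (hpos (a := fun _ => ϱΓ / m - 1) fun _ => hε)
    have hzero : zeroOneVec (m + 2) m ∈ Γ := by
      refine zeroOneVec_mem_of_mem hm hc hs hp (a := ϱΓ / m - ϱΓ) (b := ϱΓ / m)
        (by positivity) (by field_simp; ring) ?_
      convert hmem using 1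
      funext i
      simp only [rhoVec, Pi.add_apply, Nat.add_succ_sub_one]
      split_ifs <;> ring
    have := hκ.2 ⟨by omega, hzero⟩
    omega
  push_cast
  refine ⟨?_, by linarith⟩
  have : 1 ≤ ((m : ℝ) + 2 - 2) / ϱΓ := by
    rw [le_div_iff₀ hϱ0]
    linarith
  linarith
end
end

section
/- Let Γ ⊂ ℝⁿ be an open symmetric convex cone as below. Then 1 ≤ ϱ_Γ ≤ n. Moreover, ϱ_Γ = 1 if and only if Γ = Γₙ (the positive orthant), and ϱ_Γ = n if and only if Γ = Γ₁ := {λ ∈ ℝⁿ : Σᵢ λᵢ > 0}. -/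
/-!
An open convex cone satisfies `Γ + closure Γ ⊆ Γ` (`IsAdmissibleCone.add_smul_mem`), and `0 ∉ Γ`
since its frontier is nonempty. Write `v = (1,…,1,1-ϱ)`; then `v ∈ closure Γ` and `v ∉ Γ`.

Summing the cyclic shifts of a point of `Γ` shows `Γ ⊆ Γ₁`, so `∑ v = n - ϱ ≥ 0`; and `ϱ < 1` would
place `v` in the positive orthant, hence in `Γ`. If `ϱ = 1` and some `x ∈ Γ` had a nonpositive
coordinate, adding a nonnegative vector to a permutation of `x` would give a positive multiple
of `v = (1,…,1,0)`, forcing `v ∈ Γ`. If `ϱ = n`, every vector with positive sum is a positive multiple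
of `(1,…,1)` plus a nonnegative combination of permutations of `v = (1,…,1,1-n)`, so `Γ₁ ⊆ Γ`.
The converses follow by evaluating the last coordinate, respectively the sum, at `v`.
-/

open Finset

noncomputable section

namespace IsAdmissibleCone

variable {n : ℕ} {Γ : Set (Fin n → ℝ)}

lemma comp_mem_closure (h : IsAdmissibleCone Γ) {y : Fin n → ℝ} (hy : y ∈ closure Γ)
    (σ : Equiv.Perm (Fin n)) : y ∘ σ ∈ closure Γ :=
  map_mem_closure (f := fun z : Fin n → ℝ => z ∘ σ) (by fun_prop) hy
    fun z hz => h.2.2.2.1 z hz σ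

/-- An open convex cone absorbs nonnegative multiples of points of its closure: up to scaling,
`x + t • y` is the midpoint of an interior point and a point of the closure. -/
lemma add_smul_mem (h : IsAdmissibleCone Γ) {x y : Fin n → ℝ} (hx : x ∈ Γ)
    (hy : y ∈ closure Γ) {t : ℝ} (ht : 0 ≤ t) : x + t • y ∈ Γ := by
  obtain ⟨ho, hc, hs, -⟩ := h
  rcases ht.eq_or_lt with rfl | ht
  · simpa using hx
  · have h1 : t⁻¹ • x ∈ interior Γ := by
      rw [ho.interior_eq]; exact hs x hx _ (by positivity)
    have h2 := hc.combo_interior_closure_mem_interior h1 hy (a := 1 / 2) (b := 1 / 2)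
      (by norm_num) (by norm_num) (by norm_num)
    rw [ho.interior_eq] at h2
    convert hs _ h2 (2 * t) (by positivity) using 1
    ext i
    simp only [Pi.add_apply, Pi.smul_apply, smul_eq_mul]
    field_simp

lemma add_sum_smul_mem (h : IsAdmissibleCone Γ) {ι : Type*} (s : Finset ι) {x : Fin n → ℝ}
    (hx : x ∈ Γ) (y : ι → Fin n → ℝ) (hy : ∀ j, y j ∈ closure Γ) (a : ι → ℝ)
    (ha : ∀ j, 0 ≤ a j) : x + ∑ j ∈ s, a j • y j ∈ Γ := by
  classical
  induction s using Finset.induction_on with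
  | empty => simpa using hx
  | insert j s hj ih =>
    rw [Finset.sum_insert hj, add_left_comm, add_comm]
    exact h.add_smul_mem ih (hy j) (ha j)

lemma add_nonneg_mem (h : IsAdmissibleCone Γ) {x y : Fin n → ℝ} (hx : x ∈ Γ)
    (hy : ∀ i, 0 ≤ y i) : x + y ∈ Γ := by
  have hcl : y ∈ closure Γ := by
    apply closure_mono h.2.2.2.2.1
    have : {x : Fin n → ℝ | ∀ i, 0 < x i} = Set.pi Set.univ fun _ => Set.Ioi 0 := by
      ext; simp
    rw [this, closure_pi_set]
    simp only [closure_Ioi, Set.mem_pi, Set.mem_Ici]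
    exact fun i _ => hy i
  simpa using h.add_smul_mem hx hcl zero_le_one

/-- A neighbourhood of `0` spans `ℝⁿ` by scaling, so a cone containing `0` in its interior
has empty frontier. -/
lemma zero_notMem_s16 (h : IsAdmissibleCone Γ) : (0 : Fin n → ℝ) ∉ Γ := by
  intro h0
  obtain ⟨ho, -, hs, -, -, hne⟩ := h
  have : Γ = Set.univ := by
    refine Set.eq_univ_of_forall fun y => ?_
    have ht : Filter.Tendsto (fun t : ℝ => t • y) (nhdsWithin 0 (Set.Ioi 0)) (nhds 0) := by
      have : Continuous fun t : ℝ => t • y := by fun_prop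
      simpa using (this.tendsto 0).mono_left nhdsWithin_le_nhds
    obtain ⟨t, h1, h2⟩ :=
      ((ht.eventually (ho.mem_nhds h0)).and self_mem_nhdsWithin).exists
    have h2 : 0 < t := h2
    simpa [smul_smul, h2.ne'] using hs _ h1 t⁻¹ (by positivity)
  simp [this] at hne

/-- The cyclic shifts of `x` add up to the constant vector `∑ i, x i`. If that constant were
nonpositive, adding a multiple of `(1,…,1)` would put `0` in `Γ`. -/
lemma sum_pos_s16 (h : IsAdmissibleCone Γ) [NeZero n] {x : Fin n → ℝ} (hx : x ∈ Γ) :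
    0 < ∑ i, x i := by
  by_contra! hS
  have h1 : (1 : Fin n → ℝ) ∈ Γ := h.2.2.2.2.1 fun i => by simp
  have hc := h.add_sum_smul_mem (Finset.univ.erase (0 : Fin n)) hx
    (fun k => x ∘ Equiv.addRight k)
    (fun k => subset_closure (h.2.2.2.1 x hx _)) (fun _ => 1) (fun _ => zero_le_one)
  have h0 := h.add_smul_mem hc (subset_closure h1) (t := -∑ i, x i) (by linarith)
  apply h.zero_notMem_s16
  convert h0 using 1
  ext i
  have hsum : ∑ k, x (i + k) = ∑ k, x k := Equiv.sum_comp (Equiv.addLeft i) x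
  rw [← Finset.add_sum_erase _ _ (Finset.mem_univ (0 : Fin n))] at hsum
  simp only [add_zero] at hsum
  simp only [one_smul, Pi.zero_apply, Pi.add_apply, Finset.sum_apply, Function.comp_apply,
    Equiv.coe_addRight, hsum, Pi.smul_apply, Pi.one_apply, smul_eq_mul, mul_one, add_neg_cancel]

end IsAdmissibleCone

/-- `1 ≤ ϱ_Γ ≤ n`; moreover `ϱ_Γ = 1` iff `Γ = Γₙ` (the positive orthant)
and `ϱ_Γ = n` iff `Γ = Γ₁ = {λ : ∑ᵢ λᵢ > 0}`. -/
theorem rho_bounds_and_rigidity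
    (n : ℕ) (hn : 1 ≤ n) (Γ : Set (Fin n → ℝ)) (hΓ : IsAdmissibleCone Γ)
    (ϱΓ : ℝ) (hϱΓ : rhoVec n ϱΓ ∈ frontier Γ) :
    (1 ≤ ϱΓ ∧ ϱΓ ≤ (n : ℝ)) ∧
    (ϱΓ = 1 ↔ Γ = {x : Fin n → ℝ | ∀ i, 0 < x i}) ∧
    (ϱΓ = (n : ℝ) ↔ Γ = {x : Fin n → ℝ | 0 < ∑ i, x i}) := by
  obtain ⟨m, rfl⟩ : ∃ m, n = m + 1 := ⟨n - 1, by omega⟩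
  have hv : ∀ i, rhoVec (m + 1) ϱΓ i = if i = Fin.last m then 1 - ϱΓ else 1 := by
    intro i
    simp [rhoVec, Fin.ext_iff]
  have hvcl : rhoVec (m + 1) ϱΓ ∈ closure Γ := hϱΓ.1
  have hvn : rhoVec (m + 1) ϱΓ ∉ Γ := by
    have := hϱΓ.2
    rwa [hΓ.1.interior_eq] at this
  have hvsum : ∑ i, rhoVec (m + 1) ϱΓ i = (m + 1 : ℝ) - ϱΓ := by
    rw [Fin.sum_univ_castSucc]
    simp only [hv, (Fin.castSucc_lt_last _).ne, if_false, if_true]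
    simp
    ring
  have hsub : Γ ⊆ {x | 0 < ∑ i, x i} := fun x hx => hΓ.sum_pos_s16 hx
  have hge : 1 ≤ ϱΓ := by
    by_contra! hlt
    refine hvn (hΓ.2.2.2.2.1 fun i => ?_)
    rw [hv]
    split_ifs <;> linarith
  have hle : ϱΓ ≤ ((m + 1 : ℕ) : ℝ) := by
    have hclosed : IsClosed {x : Fin (m + 1) → ℝ | 0 ≤ ∑ i, x i} :=
      isClosed_le continuous_const (by fun_prop)
    have : 0 ≤ ∑ i, rhoVec (m + 1) ϱΓ i :=
      closure_minimal (s := Γ) (fun x hx => (hΓ.sum_pos_s16 hx).le) hclosed hvcl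
    push_cast
    linarith
  refine ⟨⟨hge, hle⟩, ⟨fun h1 => ?_, fun hEq => ?_⟩, ⟨fun h1 => ?_, fun hEq => ?_⟩⟩
  · refine Set.Subset.antisymm (fun x hx i => ?_) hΓ.2.2.2.2.1
    by_contra! hi
    -- Move the nonpositive coordinate of `x` to the last place; a large multiple of
    -- `(1,…,1,0)` then dominates the permuted vector coordinatewise.
    set z := x ∘ Equiv.swap i (Fin.last m) with hz
    have hzΓ : z ∈ Γ := hΓ.2.2.2.1 x hx _
    have hzl : z (Fin.last m) ≤ 0 := by simpa [hz] using hi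
    have hzb : ∀ j, z j ≤ 1 + ∑ k, |z k| := fun j => by
      have := Finset.single_le_sum (f := fun k => |z k|) (fun k _ => abs_nonneg _)
        (Finset.mem_univ j)
      have := le_abs_self (z j)
      linarith
    have ht : 0 < 1 + ∑ k, |z k| := by positivity
    set t := 1 + ∑ k, |z k|
    have h2 : t • rhoVec (m + 1) ϱΓ ∈ Γ := by
      have := hΓ.add_nonneg_mem hzΓ (y := t • rhoVec (m + 1) ϱΓ - z) (fun j => by
        simp only [Pi.sub_apply, Pi.smul_apply, smul_eq_mul, hv]
        split_ifs with hj
        · rw [hj, h1]; linarith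
        · linarith [hzb j])
      simpa using this
    have h3 := hΓ.2.2.1 _ h2 t⁻¹ (by positivity)
    rw [smul_smul, inv_mul_cancel₀ ht.ne', one_smul] at h3
    exact hvn h3
  · refine le_antisymm ?_ hge
    have hclosed : IsClosed {x : Fin (m + 1) → ℝ | 0 ≤ x (Fin.last m)} :=
      isClosed_le continuous_const (by fun_prop)
    have : 0 ≤ rhoVec (m + 1) ϱΓ (Fin.last m) := by
      refine closure_minimal (s := Γ) (fun x hx => ?_) hclosed hvcl
      rw [hEq] at hx
      exact (hx _).le
    rw [hv, if_pos rfl] at this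
    linarith
  · refine Set.Subset.antisymm hsub fun x hx => ?_
    have hx : 0 < ∑ i, x i := hx
    have hN : (0 : ℝ) < m + 1 := by positivity
    have hM : ∀ j, x j ≤ ∑ k, |x k| := fun j =>
      (le_abs_self _).trans (Finset.single_le_sum (f := fun k => |x k|)
        (fun k _ => abs_nonneg _) (Finset.mem_univ j))
    set M := ∑ k, |x k|
    -- With `n = m + 1`, the permutations of `rhoVec n n` are `1 - n eⱼ`, and
    -- `x = (∑ x / n) • 1 + ∑ⱼ ((M - xⱼ) / n) • (1 - n eⱼ)`.
    have hs : (fun _ => (∑ i, x i) / (m + 1) : Fin (m + 1) → ℝ) ∈ Γ :=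
      hΓ.2.2.2.2.1 fun i => by positivity
    have key := hΓ.add_sum_smul_mem Finset.univ hs
      (fun j => rhoVec (m + 1) ϱΓ ∘ Equiv.swap j (Fin.last m))
      (fun j => hΓ.comp_mem_closure hvcl _) (fun j => (M - x j) / (m + 1))
      (fun j => div_nonneg (by linarith [hM j]) hN.le)
    convert key using 1
    ext i
    have hw : ∀ j, rhoVec (m + 1) ϱΓ (Equiv.swap j (Fin.last m) i)
        = 1 - if i = j then (m + 1 : ℝ) else 0 := by
      intro j
      simp only [hv, Equiv.swap_apply_eq_iff, Equiv.swap_apply_right]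
      rw [h1]
      split_ifs <;> push_cast <;> ring
    simp only [Pi.add_apply, Finset.sum_apply, Pi.smul_apply, Function.comp_apply, smul_eq_mul,
      hw, mul_sub, mul_one, mul_ite, mul_zero, Finset.sum_sub_distrib, Finset.sum_ite_eq,
      Finset.mem_univ, if_true, ← Finset.sum_div]
    simp
    field_simp
    ring
  · refine le_antisymm hle ?_
    by_contra! hlt
    refine hvn ?_
    rw [hEq]
    change 0 < ∑ i, rhoVec (m + 1) ϱΓ i
    rw [hvsum]
    push_cast at hlt
    linarith
end
end
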